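/- arXiv:dg-ga/9702017 — 2 statements merged into one kernel-verified Lean document; each statement's English description precedes it below -/
import Mathlib

section
/- Let $n \ge 1$, let $k$ be a natural number with $k \le n-1$, and let $f : \mathbb{R}^{n} \setminus \{0\} \to \mathbb{R}^{n}$ be the radial projection $f(x) = x/\|x\|$. Let $\varphi$ be a continuous map from the unit sphere $S^{n-1} \subset \mathbb{R}^{n}$ to the space of continuous alternating $k$-multilinear forms on $\mathbb{R}^{n}$. Define the pullback $f^{*}\varphi$ on $\mathbb{R}^{n} \setminus \{0\}$ by $(f^{*}\varphi)(x)(v_{1},\dots,v_{k}) = \varphi(f(x))\big(Df(x)v_{1},\dots,Df(x)v_{k}\big)$, extended by $0$ at the origin. Then $f^{*}\varphi$ is locally integrable on $\mathbb{R}^{n}$ (with respect to Lebesgue measure, as a function into the normed space of continuous alternating $k$-forms). -/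
open MeasureTheory

lemma radial_lip {E : Type*} [NormedAddCommGroup E] [NormedSpace ℝ E] (x₀ : E) (hx₀ : x₀ ≠ 0)
    (x : E) : ‖‖x‖⁻¹ • x - ‖x₀‖⁻¹ • x₀‖ ≤ 2 * ‖x₀‖⁻¹ * ‖x - x₀‖ := by
  have h0 : 0 < ‖x₀‖ := norm_pos_iff.mpr hx₀
  have e : ‖x‖⁻¹ • x - ‖x₀‖⁻¹ • x₀ = ‖x₀‖⁻¹ • (x - x₀) + (‖x‖⁻¹ - ‖x₀‖⁻¹) • x := by
    module
  have h1 : ‖(‖x‖⁻¹ - ‖x₀‖⁻¹) • x‖ ≤ ‖x₀‖⁻¹ * ‖x - x₀‖ := by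
    by_cases hx : x = 0
    · subst hx; simp; positivity
    have h2 : 0 < ‖x‖ := norm_pos_iff.mpr hx
    rw [norm_smul, ← norm_norm x, ← norm_mul]
    have : (‖x‖⁻¹ - ‖x₀‖⁻¹) * ‖x‖ = ‖x₀‖⁻¹ * (‖x₀‖ - ‖x‖) := by field_simp
    rw [norm_norm, this, norm_mul, norm_inv, norm_norm]
    gcongr
    rw [norm_sub_rev x x₀]
    exact abs_norm_sub_norm_le _ _
  rw [e]
  refine (norm_add_le _ _).trans ?_
  have h3 : ‖‖x₀‖⁻¹ • (x - x₀)‖ = ‖x₀‖⁻¹ * ‖x - x₀‖ := by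
    rw [norm_smul, norm_inv, norm_norm]
  linarith

lemma radial_fderiv_le {E : Type*} [NormedAddCommGroup E] [NormedSpace ℝ E] (x : E)
    (hx : x ≠ 0) : ‖fderiv ℝ (fun y : E => ‖y‖⁻¹ • y) x‖ ≤ 2 * ‖x‖⁻¹ :=
  norm_fderiv_le_of_lip' ℝ (by positivity) (Filter.Eventually.of_forall (radial_lip x hx))

lemma radial_fderiv_cont {E : Type*} [NormedAddCommGroup E] [InnerProductSpace ℝ E] :
    ContinuousOn (fderiv ℝ (fun y : E => ‖y‖⁻¹ • y)) ({0}ᶜ : Set E) := by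
  have h : ContDiffOn ℝ 1 (fun y : E => ‖y‖⁻¹ • y) ({0}ᶜ : Set E) := by
    intro x hx
    have hx : x ≠ 0 := hx
    exact (((contDiffAt_norm ℝ hx).inv (norm_ne_zero_iff.mpr hx)).smul
      contDiffAt_id).contDiffWithinAt
  exact h.continuousOn_fderiv_of_isOpen isOpen_compl_singleton le_rfl

/-- The pullback of a continuous family `φ` of continuous alternating
`k`-multilinear forms on `ℝⁿ` (defined on the unit sphere) under the radial projection
`f(x) = x/‖x‖`, extended by `0` at the origin, is locally integrable when `k ≤ n - 1`.
Continuous alternating `k`-forms are formalized as continuous multilinear forms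
satisfying the alternating condition, with the operator norm. -/
theorem stmt_3 (n k : ℕ) (hn : 1 ≤ n) (hk : k ≤ n - 1)
    (φ : Metric.sphere (0 : EuclideanSpace ℝ (Fin n)) 1 →
      ContinuousMultilinearMap ℝ (fun _ : Fin k => EuclideanSpace ℝ (Fin n)) ℝ)
    (hφ : Continuous φ)
    (hφalt : ∀ y, ∀ v : Fin k → EuclideanSpace ℝ (Fin n), ∀ i j : Fin k,
      v i = v j → i ≠ j → φ y v = 0)
    (g : EuclideanSpace ℝ (Fin n) →
      ContinuousMultilinearMap ℝ (fun _ : Fin k => EuclideanSpace ℝ (Fin n)) ℝ)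
    (hg0 : g 0 = 0)
    (hg : ∀ x : EuclideanSpace ℝ (Fin n), ∀ hx : x ≠ 0,
      g x = (φ ⟨‖x‖⁻¹ • x, by
            rw [mem_sphere_zero_iff_norm, norm_smul, norm_inv, norm_norm,
              inv_mul_cancel₀ (norm_ne_zero_iff.mpr hx)]⟩).compContinuousLinearMap
        (fun _ => fderiv ℝ (fun y : EuclideanSpace ℝ (Fin n) => ‖y‖⁻¹ • y) x)) :
    LocallyIntegrable g volume := by
  have hne : Nonempty (Fin n) := ⟨⟨0, hn⟩⟩
  have hcont : ContinuousOn g ({0}ᶜ : Set (EuclideanSpace ℝ (Fin n))) := by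
    rw [continuousOn_iff_continuous_domRestrict]
    have hp : Continuous (fun x : ({0}ᶜ : Set (EuclideanSpace ℝ (Fin n))) =>
        (⟨‖x.1‖⁻¹ • x.1, by
            rw [mem_sphere_zero_iff_norm, norm_smul, norm_inv, norm_norm,
              inv_mul_cancel₀ (norm_ne_zero_iff.mpr x.2)]⟩ :
          Metric.sphere (0 : EuclideanSpace ℝ (Fin n)) 1)) := by
      refine Continuous.subtype_mk ?_ _
      exact ((continuous_norm.comp continuous_subtype_val).inv₀
        (fun x => norm_ne_zero_iff.mpr x.2)).smul continuous_subtype_val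
    have hd := continuousOn_iff_continuous_domRestrict.mp
      (radial_fderiv_cont (E := EuclideanSpace ℝ (Fin n)))
    have hL := (ContinuousMultilinearMap.compContinuousLinearMapContinuousMultilinear ℝ
      (fun _ : Fin k => EuclideanSpace ℝ (Fin n)) (fun _ : Fin k => EuclideanSpace ℝ (Fin n))
      ℝ).cont.comp (continuous_pi (fun _ : Fin k => hd))
    refine (hL.clm_apply (hφ.comp hp)).congr ?_
    intro x
    rw [Set.domRestrict_apply, hg x.1 x.2]
    rfl
  have hmeas : AEStronglyMeasurable g volume := by
    have := hcont.aestronglyMeasurable (μ := volume) (measurableSet_singleton _).compl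
    rwa [restrict_compl_singleton] at this
  obtain ⟨M, hM0, hM⟩ : ∃ M : ℝ, 0 ≤ M ∧ ∀ y, ‖φ y‖ ≤ M := by
    obtain ⟨M, hM⟩ := (isCompact_range hφ).isBounded.exists_norm_le
    exact ⟨max M 0, le_max_right _ _, fun y => (hM _ ⟨y, rfl⟩).trans (le_max_left _ _)⟩
  refine locallyIntegrable_of_norm_le_rpow (C := M * 2 ^ k) (α := k)
    (by simpa using hn) ?_ ?_ hmeas
  · rw [finrank_euclideanSpace_fin]
    exact_mod_cast (by omega : k < n)
  · have h0 : ∀ᵐ x : EuclideanSpace ℝ (Fin n), x ≠ 0 := by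
      simp [ae_iff]
    filter_upwards [h0] with x hx
    rw [hg x hx]
    refine (ContinuousMultilinearMap.norm_compContinuousLinearMap_le _ _).trans ?_
    rw [Finset.prod_const, Finset.card_univ, Fintype.card_fin, Real.rpow_neg (norm_nonneg _),
      Real.rpow_natCast, mul_assoc, ← inv_pow, ← mul_pow]
    exact mul_le_mul (hM _) (pow_le_pow_left₀ (norm_nonneg _) (radial_fderiv_le x hx) k)
      (by positivity) hM0
end

section
/- Let $V$ be a finite-dimensional real vector space, let $W$ be a finite-dimensional complex vector space, and let $A : V \to W$ be an injective $\mathbb{R}$-linear map. Let $A_{\mathbb{C}} : \mathbb{C} \otimes_{\mathbb{R}} V \to W$ be the unique $\mathbb{C}$-linear map with $A_{\mathbb{C}}(z \otimes v) = z \cdot A(v)$. Then the kernel of $A_{\mathbb{C}}$ is real-linearly isomorphic to the real subspace $A(V) \cap i\,A(V)$ of $W$; in particular $\dim_{\mathbb{R}} \ker A_{\mathbb{C}} = \dim_{\mathbb{R}}\big(A(V) \cap i\,A(V)\big)$, and hence the complex rank of $A_{\mathbb{C}}$ equals $\dim_{\mathbb{R}} V - \tfrac{1}{2}\dim_{\mathbb{R}}\big(A(V)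 \cap i\,A(V)\big)$. -/
open scoped TensorProduct

open Module

/-- The real part `ℂ ⊗ V → V`. -/
noncomputable def tRe (V : Type*) [AddCommGroup V] [Module ℝ V] : ℂ ⊗[ℝ] V →ₗ[ℝ] V :=
  (TensorProduct.lid ℝ V).toLinearMap ∘ₗ LinearMap.rTensor V Complex.reLm

/-- The imaginary part `ℂ ⊗ V → V`. -/
noncomputable def tIm (V : Type*) [AddCommGroup V] [Module ℝ V] : ℂ ⊗[ℝ] V →ₗ[ℝ] V :=
  (TensorProduct.lid ℝ V).toLinearMap ∘ₗ LinearMap.rTensor V Complex.imLm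

theorem tRe_tmul {V : Type*} [AddCommGroup V] [Module ℝ V] (z : ℂ) (v : V) :
    tRe V (z ⊗ₜ[ℝ] v) = z.re • v := by simp [tRe]

theorem tIm_tmul {V : Type*} [AddCommGroup V] [Module ℝ V] (z : ℂ) (v : V) :
    tIm V (z ⊗ₜ[ℝ] v) = z.im • v := by simp [tIm]

theorem t_decomp {V : Type*} [AddCommGroup V] [Module ℝ V] (x : ℂ ⊗[ℝ] V) :
    x = (1 : ℂ) ⊗ₜ[ℝ] tRe V x + Complex.I ⊗ₜ[ℝ] tIm V x := by
  induction x using TensorProduct.induction_on with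
  | zero => simp
  | tmul z v =>
    rw [tRe_tmul, tIm_tmul, ← TensorProduct.smul_tmul, ← TensorProduct.smul_tmul,
      ← TensorProduct.add_tmul]
    congr 1
    apply Complex.ext <;> simp
  | add x y hx hy =>
    rw [map_add, map_add, TensorProduct.tmul_add, TensorProduct.tmul_add]
    nth_rewrite 1 [hx, hy]
    abel

/-- For an injective `ℝ`-linear map `A : V → W` into a finite-dimensional
complex vector space, the kernel of the complexification `A_ℂ : ℂ ⊗[ℝ] V → W` is
real-linearly isomorphic to `A(V) ∩ i A(V)`; in particular their real dimensions agree,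
and the complex rank of `A_ℂ` equals `dim_ℝ V - ½ dim_ℝ (A(V) ∩ i A(V))`. -/
theorem stmt_7 {V W : Type*} [AddCommGroup V] [Module ℝ V] [FiniteDimensional ℝ V]
    [AddCommGroup W] [Module ℂ W] [Module ℝ W] [IsScalarTower ℝ ℂ W]
    [FiniteDimensional ℂ W]
    (A : V →ₗ[ℝ] W) (hA : Function.Injective A)
    (B : ℂ ⊗[ℝ] V →ₗ[ℂ] W)
    (hB : ∀ (z : ℂ) (v : V), B (z ⊗ₜ[ℝ] v) = z • A v) :
    Nonempty
      ((LinearMap.ker B).restrictScalars ℝ ≃ₗ[ℝ]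
        ↥(LinearMap.range A ⊓
          (LinearMap.range A).map ((LinearMap.lsmul ℂ W Complex.I).restrictScalars ℝ))) ∧
    finrank ℝ ((LinearMap.ker B).restrictScalars ℝ) =
      finrank ℝ ↥(LinearMap.range A ⊓
        (LinearMap.range A).map ((LinearMap.lsmul ℂ W Complex.I).restrictScalars ℝ)) ∧
    (finrank ℂ (LinearMap.range B) : ℝ) =
      (finrank ℝ V : ℝ) -
        (1 / 2) * (finrank ℝ ↥(LinearMap.range A ⊓
          (LinearMap.range A).map ((LinearMap.lsmul ℂ W Complex.I).restrictScalars ℝ)) : ℝ) := by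
  have hBx : ∀ x, B x = A (tRe V x) + Complex.I • A (tIm V x) := by
    intro x
    conv_lhs => rw [t_decomp x]
    rw [map_add, hB, hB, one_smul]
  have e : Nonempty
      ((LinearMap.ker B).restrictScalars ℝ ≃ₗ[ℝ]
        ↥(LinearMap.range A ⊓
          (LinearMap.range A).map ((LinearMap.lsmul ℂ W Complex.I).restrictScalars ℝ))) := by
    let f : (LinearMap.ker B).restrictScalars ℝ →ₗ[ℝ] W :=
      (A ∘ₗ tRe V) ∘ₗ ((LinearMap.ker B).restrictScalars ℝ).subtype
    have hk : ∀ x : (LinearMap.ker B).restrictScalars ℝ,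
        A (tRe V x.1) + Complex.I • A (tIm V x.1) = 0 := by
      intro x
      rw [← hBx]
      exact x.2
    refine ⟨LinearEquiv.ofBijective (f.codRestrict _ ?_) ⟨?_, ?_⟩⟩
    · intro x
      refine ⟨⟨tRe V x.1, rfl⟩, A (-(tIm V x.1)), ⟨_, rfl⟩, ?_⟩
      change Complex.I • A (-(tIm V x.1)) = A (tRe V x.1)
      rw [map_neg, smul_neg]
      exact (eq_neg_of_add_eq_zero_left (hk x)).symm
    · rw [injective_iff_map_eq_zero]
      intro x hx
      have h1 : A (tRe V x.1) = 0 := congrArg Subtype.val hx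
      have h2 := hk x
      rw [h1, zero_add, smul_eq_zero_iff_right Complex.I_ne_zero] at h2
      have h3 := (map_eq_zero_iff A hA).1 h1
      have h4 := (map_eq_zero_iff A hA).1 h2
      apply Subtype.ext
      rw [t_decomp x.1, h3, h4]
      simp
    · rintro ⟨w, ⟨a, ha⟩, c, ⟨b, rfl⟩, hc⟩
      change Complex.I • A b = w at hc
      refine ⟨⟨(1 : ℂ) ⊗ₜ[ℝ] a - Complex.I ⊗ₜ[ℝ] b, ?_⟩, ?_⟩
      · change B _ = 0
        rw [map_sub, hB, hB, one_smul, ha, hc, sub_self]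
      · apply Subtype.ext
        change A (tRe V ((1 : ℂ) ⊗ₜ[ℝ] a - Complex.I ⊗ₜ[ℝ] b)) = w
        rw [map_sub, tRe_tmul, tRe_tmul]
        simpa using ha
  have h2 := e.some.finrank_eq
  refine ⟨e, h2, ?_⟩
  rw [← h2]
  have h3 : finrank ℝ ((LinearMap.ker B).restrictScalars ℝ) = 2 * finrank ℂ (LinearMap.ker B) := by
    rw [← Complex.finrank_real_complex]
    exact (finrank_mul_finrank ℝ ℂ (LinearMap.ker B)).symm
  have h4 := LinearMap.finrank_range_add_finrank_ker B
  rw [finrank_baseChange] at h4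
  rw [h3, ← h4]
  push_cast
  ring
end
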